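/- Let σ ≤ 32π², α > 0, and m ≥ 1. There exists a constant C > 0 independent of α such that T^{rad}_{α,m} := sup{ ∫_B |x|^α ( e^{σu²} − Σ_{k=0}^m σ^k u^{2k}/k! ) dx : u ∈ H²_{N,rad}(B), ‖Δu‖₂ = 1 } ≤ C/α^{9/2} for all sufficiently large α. Combined with T_{α,m} ≥ C'/α⁴, this shows T^{rad}_{α,m} < T_{α,m} for all α large enough (symmetry breaking). -/

import Mathlib

open MeasureTheory

noncomputable def ω₃ : ℝ := 2 * Real.pi ^ 2

noncomputable abbrev E4 := EuclideanSpace ℝ (Fin 4)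

/-- The Laplacian on `ℝ⁴`, as the trace of the second derivative. -/
noncomputable def lap4 (u : E4 → ℝ) (x : E4) : ℝ :=
  ∑ i : Fin 4, iteratedFDeriv ℝ 2 u x ![EuclideanSpace.single i 1, EuclideanSpace.single i 1]

/-- The truncated weighted exponential functional on the unit ball `B ⊂ ℝ⁴`. -/
noncomputable def Fm (α σ : ℝ) (m : ℕ) (u : E4 → ℝ) : ℝ :=
  ∫ x in Metric.ball (0:E4) 1, ‖x‖ ^ α *
    (Real.exp (σ * (u x) ^ 2) -
      ∑ k ∈ Finset.range (m + 1), σ ^ k * (u x) ^ (2 * k) / (Nat.factorial k))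

/-- The radial Laplacian in dimension 4. -/
noncomputable def radLap (u : ℝ → ℝ) (r : ℝ) : ℝ :=
  deriv (deriv u) r + 3 / r * deriv u r

/-- The truncated functional for a radial profile on the unit ball `B ⊂ ℝ⁴`,
in polar coordinates. -/
noncomputable def FmRad (α σ : ℝ) (m : ℕ) (u : ℝ → ℝ) : ℝ :=
  ω₃ * ∫ r in Set.Ioo (0:ℝ) 1, r ^ (α + 3) *
    (Real.exp (σ * (u r) ^ 2) -
      ∑ k ∈ Finset.range (m + 1), σ ^ k * (u r) ^ (2 * k) / (Nat.factorial k))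

/-- Bound for the increment of a function whose derivative is dominated by `g + R'`. -/
theorem abs_sub_le_of_abs_deriv_le {F F' R ρ g : ℝ → ℝ} {a b μ : ℝ} (hab : a ≤ b)
    (hF : ∀ t ∈ Set.Icc a b, HasDerivAt F (F' t) t)
    (hR : ∀ t ∈ Set.Icc a b, HasDerivAt R (ρ t) t)
    (hF' : ContinuousOn F' (Set.Icc a b)) (hρ : ContinuousOn ρ (Set.Icc a b))
    (hg : ContinuousOn g (Set.Icc a b)) (hμ : ∫ t in a..b, g t ≤ μ)
    (h : ∀ t ∈ Set.Icc a b, |F' t| ≤ g t + ρ t) :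
    |F b - F a| ≤ μ + (R b - R a) := by
  rw [← Set.uIcc_of_le hab] at hF hR hF' hρ hg
  rw [← intervalIntegral.integral_eq_sub_of_hasDerivAt hF hF'.intervalIntegrable,
    ← intervalIntegral.integral_eq_sub_of_hasDerivAt hR hρ.intervalIntegrable]
  calc |∫ t in a..b, F' t| ≤ ∫ t in a..b, |F' t| :=
        intervalIntegral.abs_integral_le_integral_abs hab
    _ ≤ ∫ t in a..b, (g t + ρ t) :=
        intervalIntegral.integral_mono_on hab hF'.abs.intervalIntegrable
          (hg.add hρ).intervalIntegrable h
    _ = (∫ t in a..b, g t) + ∫ t in a..b, ρ t :=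
        intervalIntegral.integral_add hg.intervalIntegrable hρ.intervalIntegrable
    _ ≤ _ := by gcongr

/-- A function bounded below on `(0, R]` cannot have derivative at least `δ / s` there. -/
theorem not_forall_div_le_deriv {u u' : ℝ → ℝ} {R δ M : ℝ} (hR : 0 < R) (hδ : 0 < δ)
    (hu : ∀ s ∈ Set.Ioc 0 R, HasDerivAt u (u' s) s) (hM : ∀ s ∈ Set.Ioc 0 R, M ≤ u s) :
    ¬ ∀ s ∈ Set.Ioc 0 R, δ / s ≤ u' s := by
  intro h
  have hd : ∀ s ∈ Set.Ioc 0 R,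
      HasDerivAt (fun s => u s - δ * Real.log s) (u' s - δ * s⁻¹) s := fun s hs =>
    (hu s hs).sub ((Real.hasDerivAt_log hs.1.ne').const_mul δ)
  have hmono : MonotoneOn (fun s => u s - δ * Real.log s) (Set.Ioc 0 R) := by
    apply monotoneOn_of_deriv_nonneg (convex_Ioc 0 R)
      (fun s hs => (hd s hs).continuousAt.continuousWithinAt)
      (fun s hs => (hd s (interior_subset hs)).differentiableAt.differentiableWithinAt)
    intro s hs
    rw [(hd s (interior_subset hs)).deriv]
    have := h s (interior_subset hs)
    rw [div_eq_mul_inv] at this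
    linarith
  set K := u R - M + 1
  have hK : 0 ≤ K := by linarith [hM R ⟨hR, le_rfl⟩]
  have hs : R * Real.exp (-(K / δ)) ∈ Set.Ioc 0 R := by
    refine ⟨by positivity, mul_le_of_le_one_right hR.le ?_⟩
    rw [Real.exp_le_one_iff, neg_nonpos]
    positivity
  have h1 := hmono hs ⟨hR, le_rfl⟩ hs.2
  have h2 := hM _ hs
  simp only [Real.log_mul hR.ne' (Real.exp_pos _).ne', Real.log_exp] at h1
  have : δ * (K / δ) = K := by field_simp
  nlinarith

theorem continuousOn_and_hasDerivAt_of_contDiffOn_two {u : ℝ → ℝ}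
    (hu : ContDiffOn ℝ 2 u (Set.Ioo 0 1)) :
    ContinuousOn (deriv u) (Set.Ioo 0 1) ∧ ContinuousOn (deriv (deriv u)) (Set.Ioo 0 1) ∧
    ∀ r ∈ Set.Ioo (0:ℝ) 1,
      HasDerivAt u (deriv u r) r ∧ HasDerivAt (deriv u) (deriv (deriv u) r) r := by
  have h2 : (2 : WithTop ℕ∞) = 1 + 1 := by norm_num
  rw [h2, contDiffOn_succ_iff_deriv_of_isOpen isOpen_Ioo] at hu
  obtain ⟨hd, -, hu1⟩ := hu
  have h1 : (1 : WithTop ℕ∞) = 0 + 1 := by norm_num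
  have hc := hu1.continuousOn
  rw [h1, contDiffOn_succ_iff_deriv_of_isOpen isOpen_Ioo] at hu1
  obtain ⟨hd1, -, hu2⟩ := hu1
  exact ⟨hc, hu2.continuousOn, fun r hr =>
    ⟨(hd.differentiableAt (isOpen_Ioo.mem_nhds hr)).hasDerivAt,
     (hd1.differentiableAt (isOpen_Ioo.mem_nhds hr)).hasDerivAt⟩⟩

theorem exp_sub_one_sub_le {s : ℝ} (hs : 0 ≤ s) :
    Real.exp s - 1 - s ≤ s ^ 2 * Real.exp s := by
  have h1 : Real.exp s * (1 - s) ≤ 1 := by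
    have := Real.one_sub_le_exp_neg s
    calc Real.exp s * (1 - s) ≤ Real.exp s * Real.exp (-s) := by gcongr
      _ = 1 := by rw [← Real.exp_add]; simp
  nlinarith

/-- The Beta integral `B(γ + 1, 5)`. -/
theorem integral_rpow_mul_one_sub_pow_four {γ : ℝ} (hγ : 0 ≤ γ) :
    ∫ r in (0:ℝ)..1, r ^ γ * (1 - r) ^ 4 =
      24 / ((γ + 1) * (γ + 2) * (γ + 3) * (γ + 4) * (γ + 5)) := by
  have h : ∀ r ∈ Set.uIcc (0:ℝ) 1, r ^ γ * (1 - r) ^ 4 =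
      r ^ γ - 4 * r ^ (γ + 1) + 6 * r ^ (γ + 2) - 4 * r ^ (γ + 3) + r ^ (γ + 4) := by
    intro r hr
    rw [Set.uIcc_of_le zero_le_one] at hr
    have e : ∀ n : ℕ, 0 < n → r ^ (γ + n) = r ^ γ * r ^ n := fun n hn => by
      rw [Real.rpow_add_of_nonneg hr.1 hγ (by positivity), Real.rpow_natCast]
    have e1 := e 1 (by norm_num)
    have e2 := e 2 (by norm_num)
    have e3 := e 3 (by norm_num)
    have e4 := e 4 (by norm_num)
    push_cast at e1 e2 e3 e4
    rw [e1, e2, e3, e4]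
    ring
  have i : ∀ c : ℝ, 0 ≤ c → IntervalIntegrable (fun r : ℝ => r ^ c) volume 0 1 :=
    fun c hc => intervalIntegral.intervalIntegrable_rpow' (by linarith)
  have v : ∀ c : ℝ, 0 ≤ c → ∫ r in (0:ℝ)..1, r ^ c = 1 / (c + 1) := fun c hc => by
    rw [integral_rpow (Or.inl (by linarith)), Real.one_rpow, Real.zero_rpow (by linarith), sub_zero]
  rw [intervalIntegral.integral_congr h,
    intervalIntegral.integral_add (by
      refine IntervalIntegrable.sub (IntervalIntegrable.add (IntervalIntegrable.sub ?_ ?_) ?_) ?_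
      · exact i _ hγ
      all_goals exact (i _ (by positivity)).const_mul _) (i _ (by positivity)),
    intervalIntegral.integral_sub (by
      refine IntervalIntegrable.add (IntervalIntegrable.sub ?_ ?_) ?_
      · exact i _ hγ
      all_goals exact (i _ (by positivity)).const_mul _) ((i _ (by positivity)).const_mul _),
    intervalIntegral.integral_add (by
      refine IntervalIntegrable.sub ?_ ?_
      · exact i _ hγ
      all_goals exact (i _ (by positivity)).const_mul _) ((i _ (by positivity)).const_mul _),
    intervalIntegral.integral_sub (i _ hγ) ((i _ (by positivity)).const_mul _)]
  simp only [intervalIntegral.integral_const_mul]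
  rw [v _ hγ, v _ (by positivity), v _ (by positivity), v _ (by positivity), v _ (by positivity)]
  field_simp
  ring

section RadialBounds

variable {u : ℝ → ℝ}

theorem intervalIntegral_radLap_le
    (hint : IntegrableOn (fun r => (radLap u r) ^ 2 * r ^ 3) (Set.Ioo 0 1))
    (hN : ∫ r in Set.Ioo (0:ℝ) 1, (radLap u r) ^ 2 * r ^ 3 ≤ 1) {a b : ℝ} (ha : 0 < a)
    (hab : a ≤ b) (hb : b < 1) (c : ℝ) (hc : 0 ≤ c) :
    ∫ t in a..b, c * ((radLap u t) ^ 2 * t ^ 3) ≤ c := by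
  rw [intervalIntegral.integral_const_mul]
  refine mul_le_of_le_one_right hc (le_trans ?_ hN)
  rw [intervalIntegral.integral_of_le hab]
  refine setIntegral_mono_set hint ?_
    (Filter.Eventually.of_forall fun x hx => ⟨ha.trans hx.1, hx.2.trans_lt hb⟩)
  filter_upwards [ae_restrict_mem measurableSet_Ioo] with x hx
  have := hx.1
  simp only [Pi.zero_apply]
  positivity

theorem continuousOn_radLap (hu : ContDiffOn ℝ 2 u (Set.Ioo 0 1)) :
    ContinuousOn (radLap u) (Set.Ioo 0 1) := by
  obtain ⟨h1, h2, -⟩ := continuousOn_and_hasDerivAt_of_contDiffOn_two hu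
  unfold radLap
  exact h2.add ((continuousOn_const.div continuousOn_id fun x hx => hx.1.ne').mul h1)

theorem hasDerivAt_cube_mul_deriv (hu : ContDiffOn ℝ 2 u (Set.Ioo 0 1)) {r : ℝ}
    (hr : r ∈ Set.Ioo (0:ℝ) 1) :
    HasDerivAt (fun r => r ^ 3 * deriv u r) (r ^ 3 * radLap u r) r := by
  obtain ⟨-, -, h⟩ := continuousOn_and_hasDerivAt_of_contDiffOn_two hu
  refine ((hasDerivAt_pow 3 r).mul (h r hr).2).congr_deriv ?_
  have := hr.1.ne'
  unfold radLap
  field_simp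
  ring

theorem abs_cube_mul_deriv_le (hu : ContDiffOn ℝ 2 u (Set.Ioo 0 1))
    (hcont : ContinuousOn u (Set.Icc 0 1))
    (hint : IntegrableOn (fun r => (radLap u r) ^ 2 * r ^ 3) (Set.Ioo 0 1))
    (hN : ∫ r in Set.Ioo (0:ℝ) 1, (radLap u r) ^ 2 * r ^ 3 ≤ 1) {r : ℝ}
    (hr : r ∈ Set.Ioo (0:ℝ) 1) : |r ^ 3 * deriv u r| ≤ r ^ 2 := by
  have hf := continuousOn_radLap hu
  obtain ⟨-, -, hd⟩ := continuousOn_and_hasDerivAt_of_contDiffOn_two hu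
  have hr0 := hr.1
  have key : ∀ s ∈ Set.Ioc 0 r, |r ^ 3 * deriv u r - s ^ 3 * deriv u s| ≤ r ^ 2 := by
    intro s hs
    have hsub : Set.Icc s r ⊆ Set.Ioo 0 1 := fun t ht =>
      ⟨hs.1.trans_le ht.1, ht.2.trans_lt hr.2⟩
    have hf' := hf.mono hsub
    have := abs_sub_le_of_abs_deriv_le (F := fun r => r ^ 3 * deriv u r)
      (F' := fun r => r ^ 3 * radLap u r) (R := fun t => t ^ 4 / (8 * r ^ 2))
      (ρ := fun t => t ^ 3 / (2 * r ^ 2))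
      (g := fun t => r ^ 2 / 2 * ((radLap u t) ^ 2 * t ^ 3)) (μ := r ^ 2 / 2) hs.2
      (fun t ht => hasDerivAt_cube_mul_deriv hu (hsub ht))
      (fun t _ => by
        refine ((hasDerivAt_pow 4 t).div_const (8 * r ^ 2)).congr_deriv ?_
        push_cast
        field_simp
        ring)
      (by fun_prop) (by fun_prop) (by fun_prop)
      (intervalIntegral_radLap_le hint hN hs.1 hs.2 hr.2 _ (by positivity))
      (fun t ht => by
        have ht0 := (hsub ht).1
        rw [abs_mul, abs_of_pos (by positivity : 0 < t ^ 3)]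
        have h : |radLap u t| ≤ r ^ 2 / 2 * (radLap u t) ^ 2 + 1 / (2 * r ^ 2) := by
          have h2 : 0 ≤ (r ^ 2 * |radLap u t| - 1) ^ 2 / (2 * r ^ 2) := by positivity
          have h3 : (r ^ 2 * |radLap u t| - 1) ^ 2 / (2 * r ^ 2) =
            r ^ 2 / 2 * |radLap u t| ^ 2 + 1 / (2 * r ^ 2) - |radLap u t| := by
            field_simp
            ring
          rw [sq_abs] at h3
          linarith
        calc t ^ 3 * |radLap u t|
            ≤ t ^ 3 * (r ^ 2 / 2 * (radLap u t) ^ 2 + 1 / (2 * r ^ 2)) := by gcongr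
          _ = _ := by ring)
    refine this.trans ?_
    have h1 : r ^ 4 / (8 * r ^ 2) = r ^ 2 / 8 := by field_simp
    have h2 : 0 ≤ s ^ 4 / (8 * r ^ 2) := by positivity
    simp only [h1]
    nlinarith [sq_nonneg r]
  by_contra! hlt
  obtain ⟨M, hM⟩ := isCompact_Icc.exists_bound_of_continuousOn hcont
  have hsub : Set.Ioc 0 r ⊆ Set.Ioo 0 1 := fun t ht => ⟨ht.1, ht.2.trans_lt hr.2⟩
  have hdiv : ∀ s ∈ Set.Ioc 0 r, ∀ δ y : ℝ, 0 < δ → δ ≤ s ^ 3 * y → δ / s ≤ y := by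
    intro s hs δ y hδ h
    have hs0 := hs.1
    have h1 : s ^ 2 ≤ 1 := pow_le_one₀ hs0.le (hsub hs).2.le
    have hy : 0 < y := by
      by_contra! hy
      nlinarith [mul_nonneg (pow_pos hs0 3).le (neg_nonneg.mpr hy)]
    rw [div_le_iff₀ hs0]
    have : s ^ 3 * y = s ^ 2 * (y * s) := by ring
    nlinarith [mul_pos hy hs0]
  have hδ := sub_pos.mpr hlt
  rcases le_total 0 (r ^ 3 * deriv u r) with h0 | h0
  · refine not_forall_div_le_deriv (M := -M) hr0 hδ (fun s hs => (hd s (hsub hs)).1)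
      (fun s hs => ?_) fun s hs => hdiv s hs _ _ hδ ?_
    · exact (abs_le.mp (hM s (Set.Ioo_subset_Icc_self (hsub hs)))).1
    · rw [abs_of_nonneg h0]
      linarith [(abs_le.mp (key s hs)).2]
  · refine not_forall_div_le_deriv (M := -M) hr0 hδ (fun s hs => (hd s (hsub hs)).1.neg)
      (fun s hs => ?_) fun s hs => hdiv s hs _ _ hδ ?_
    · exact neg_le_neg (abs_le.mp (hM s (Set.Ioo_subset_Icc_self (hsub hs)))).2
    · rw [abs_of_nonpos h0]
      linarith [(abs_le.mp (key s hs)).1]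

theorem abs_le_neg_log (hu : ContDiffOn ℝ 2 u (Set.Ioo 0 1))
    (hcont : ContinuousOn u (Set.Icc 0 1)) (h1 : u 1 = 0)
    (hint : IntegrableOn (fun r => (radLap u r) ^ 2 * r ^ 3) (Set.Ioo 0 1))
    (hN : ∫ r in Set.Ioo (0:ℝ) 1, (radLap u r) ^ 2 * r ^ 3 ≤ 1) {r : ℝ}
    (hr : r ∈ Set.Ioo (0:ℝ) 1) : |u r| ≤ -Real.log r := by
  obtain ⟨-, -, hd⟩ := continuousOn_and_hasDerivAt_of_contDiffOn_two hu
  have hder : ∀ s ∈ Set.Ioo (0:ℝ) 1, |deriv u s| ≤ s⁻¹ := by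
    intro s hs
    have h := abs_cube_mul_deriv_le hu hcont hint hN hs
    have hs0 := hs.1
    rw [abs_mul, abs_of_pos (by positivity : 0 < s ^ 3)] at h
    rw [← one_div, le_div_iff₀ hs0]
    have : 0 < s ^ 2 := by positivity
    nlinarith
  have hmono : ∀ c : ℝ, |c| = 1 → MonotoneOn (fun s => Real.log s + c * u s) (Set.Icc r 1) := by
    intro c hc
    have hsub : Set.Ioo r 1 ⊆ Set.Ioo 0 1 := Set.Ioo_subset_Ioo_left hr.1.le
    have hd' : ∀ s ∈ Set.Ioo r 1,
        HasDerivAt (fun s => Real.log s + c * u s) (s⁻¹ + c * deriv u s) s := fun s hs =>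
      (Real.hasDerivAt_log (hsub hs).1.ne').add ((hd s (hsub hs)).1.const_mul c)
    apply monotoneOn_of_deriv_nonneg (convex_Icc r 1)
    · exact (Real.continuousOn_log.mono fun s hs => (hr.1.trans_le hs.1).ne').add
        (continuousOn_const.mul (hcont.mono (Set.Icc_subset_Icc_left hr.1.le)))
    · rw [interior_Icc]
      exact fun s hs => (hd' s hs).differentiableAt.differentiableWithinAt
    · rw [interior_Icc]
      intro s hs
      rw [(hd' s hs).deriv]
      have h := hder s (hsub hs)
      have h2 : |c * deriv u s| ≤ s⁻¹ := by rwa [abs_mul, hc, one_mul]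
      linarith [(abs_le.mp h2).1]
  have e : ∀ c : ℝ, |c| = 1 → Real.log r + c * u r ≤ 0 := by
    intro c hc
    have := hmono c hc ⟨le_rfl, hr.2.le⟩ ⟨hr.2.le, le_rfl⟩ hr.2.le
    simpa [h1] using this
  have e1 := e 1 (by simp)
  have e2 := e (-1) (by simp)
  rw [abs_le]
  constructor <;> linarith

theorem sq_le_one_sub_log (hu : ContDiffOn ℝ 2 u (Set.Ioo 0 1))
    (hcont : ContinuousOn u (Set.Icc 0 1)) (h1 : u 1 = 0)
    (hint : IntegrableOn (fun r => (radLap u r) ^ 2 * r ^ 3) (Set.Ioo 0 1))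
    (hN : ∫ r in Set.Ioo (0:ℝ) 1, (radLap u r) ^ 2 * r ^ 3 ≤ 1) {r : ℝ}
    (hr : r ∈ Set.Ioo (0:ℝ) 1) : (u r) ^ 2 ≤ 9 * (1 - Real.log r) := by
  have hf := continuousOn_radLap hu
  obtain ⟨-, -, hd⟩ := continuousOn_and_hasDerivAt_of_contDiffOn_two hu
  have hlog : Real.log r < 0 := Real.log_neg hr.1 hr.2
  have hlog2 : Real.log 2 < 1 := by linarith [Real.log_two_lt_d9]
  have hlogh : Real.log (1 / 2) = -Real.log 2 := by simp
  set l := Real.sqrt (1 - Real.log r) with hl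
  have hl2 : l ^ 2 = 1 - Real.log r := Real.sq_sqrt (by linarith)
  have hl1 : 1 ≤ l := Real.one_le_sqrt.mpr (by linarith)
  suffices h : |u r| ≤ 3 * l by
    rw [← hl2, ← sq_abs]
    nlinarith [abs_nonneg (u r)]
  rcases le_total (1 / 2) r with hr2 | hr2
  · have := Real.log_le_log (by norm_num) hr2
    linarith [abs_le_neg_log hu hcont h1 hint hN hr]
  · have hsub : Set.Icc r (1 / 2) ⊆ Set.Ioo 0 1 := fun t ht =>
      ⟨hr.1.trans_le ht.1, ht.2.trans_lt (by norm_num)⟩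
    have hf' := hf.mono hsub
    have hl0 : 0 < l := by linarith
    have hinc := abs_sub_le_of_abs_deriv_le
      (F := fun r => u r + r ^ 3 * deriv u r / (2 * r ^ 2))
      (F' := fun r => r * radLap u r / 2) (R := fun t => 1 / (4 * l) * Real.log t)
      (ρ := fun t => 1 / (4 * l) * t⁻¹)
      (g := fun t => l / 4 * ((radLap u t) ^ 2 * t ^ 3)) (μ := l / 4) hr2
      (fun t ht => by
        have ht0 := (hsub ht).1
        refine ((hd t (hsub ht)).1.add ((hasDerivAt_cube_mul_deriv hu (hsub ht)).div
          ((hasDerivAt_pow 2 t).const_mul 2) (by positivity))).congr_deriv ?_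
        push_cast
        field_simp
        ring)
      (fun t ht => (Real.hasDerivAt_log (hsub ht).1.ne').const_mul _)
      (by fun_prop)
      (continuousOn_const.mul (continuousOn_inv₀.mono fun t ht => (hsub ht).1.ne'))
      (by fun_prop)
      (intervalIntegral_radLap_le hint hN hr.1 hr2 (by norm_num) _ (by positivity))
      (fun t ht => by
        have ht0 := (hsub ht).1
        rw [abs_div, abs_mul, abs_of_pos ht0, abs_two]
        have h2 : 0 ≤ (l * t ^ 2 * |radLap u t| - 1) ^ 2 / (4 * l * t) := by positivity
        have h3 : (l * t ^ 2 * |radLap u t| - 1) ^ 2 / (4 * l * t) =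
            l / 4 * (|radLap u t| ^ 2 * t ^ 3) + 1 / (4 * l) * t⁻¹ - t * |radLap u t| / 2 := by
          field_simp
          ring
        rw [sq_abs] at h3
        linarith)
    have hb : ∀ s ∈ Set.Ioo (0:ℝ) 1, |s ^ 3 * deriv u s / (2 * s ^ 2)| ≤ 1 / 2 := by
      intro s hs
      have hs0 := hs.1
      rw [abs_div, abs_of_pos (by positivity : 0 < 2 * s ^ 2), div_le_iff₀ (by positivity)]
      linarith [abs_cube_mul_deriv_le hu hcont hint hN hs]
    have hhalf : (1 / 2 : ℝ) ∈ Set.Ioo (0:ℝ) 1 := by norm_num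
    have b1 := abs_le.mp (hb r hr)
    have b2 := abs_le.mp (hb _ hhalf)
    have b3 := abs_le.mp (abs_le_neg_log hu hcont h1 hint hN hhalf)
    have b4 := abs_le.mp hinc
    have b5 : 1 / (4 * l) * Real.log (1 / 2) - 1 / (4 * l) * Real.log r ≤ l / 4 := by
      rw [← mul_sub, one_div_mul_eq_div, div_le_div_iff₀ (by positivity) (by norm_num)]
      nlinarith [Real.log_two_gt_d9]
    rw [abs_le]
    constructor <;> linarith [b4.1, b4.2]

end RadialBounds

theorem truncated_exp_nonneg {s : ℝ} (hs : 0 ≤ s) (m : ℕ) :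
    0 ≤ Real.exp s - ∑ k ∈ Finset.range (m + 1), s ^ k / (Nat.factorial k) :=
  sub_nonneg.mpr (Real.sum_le_exp_of_nonneg hs _)

theorem truncated_exp_le {s : ℝ} (hs : 0 ≤ s) {m : ℕ} (hm : 1 ≤ m) :
    Real.exp s - ∑ k ∈ Finset.range (m + 1), s ^ k / (Nat.factorial k)
      ≤ s ^ 2 * Real.exp s := by
  have h : ∑ k ∈ Finset.range 2, s ^ k / (Nat.factorial k) ≤
      ∑ k ∈ Finset.range (m + 1), s ^ k / (Nat.factorial k) :=
    Finset.sum_le_sum_of_subset_of_nonneg (Finset.range_mono (by omega))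
      fun k _ _ => by positivity
  have h2 : ∑ k ∈ Finset.range 2, s ^ k / (Nat.factorial k) = 1 + s := by
    simp [Finset.sum_range_succ]
  linarith [exp_sub_one_sub_le hs]

theorem sum_truncated_eq (σ x : ℝ) (n : ℕ) :
    ∑ k ∈ Finset.range n, σ ^ k * x ^ (2 * k) / (Nat.factorial k) =
      ∑ k ∈ Finset.range n, (σ * x ^ 2) ^ k / (Nat.factorial k) := by
  simp only [mul_pow, pow_mul]

theorem FmRad_le {σ α : ℝ} (hσ : 0 < σ) {m : ℕ} (hm : 1 ≤ m) (hα : 9 * σ + 1 ≤ α) {u : ℝ → ℝ}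
    (hu : ContDiffOn ℝ 2 u (Set.Ioo 0 1))
    (hcont : ContinuousOn u (Set.Icc 0 1)) (h1 : u 1 = 0)
    (hint : IntegrableOn (fun r => (radLap u r) ^ 2 * r ^ 3) (Set.Ioo 0 1))
    (hN : ∫ r in Set.Ioo (0:ℝ) 1, (radLap u r) ^ 2 * r ^ 3 ≤ 1) :
    FmRad α σ m u ≤ ω₃ * (σ ^ 2 * Real.exp (9 * σ) * (24 / (α - 9 * σ) ^ 5)) := by
  unfold FmRad
  have hω : 0 ≤ ω₃ := by unfold ω₃; positivity
  refine mul_le_mul_of_nonneg_left ?_ hω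
  set γ := α - 1 - 9 * σ with hγ
  have hγ0 : 0 ≤ γ := by linarith
  set M := σ ^ 2 * Real.exp (9 * σ) with hM
  have hM0 : 0 ≤ M := by positivity
  calc _ ≤ ∫ r in Set.Ioo (0:ℝ) 1, M * (r ^ γ * (1 - r) ^ 4) := by
        refine integral_mono_of_nonneg ?_ ?_ ?_
        · filter_upwards [ae_restrict_mem measurableSet_Ioo] with r hr
          rw [sum_truncated_eq]
          exact mul_nonneg (Real.rpow_nonneg hr.1.le _)
            (truncated_exp_nonneg (by positivity) m)
        · refine (ContinuousOn.integrableOn_compact isCompact_Icc ?_).mono_set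
            Set.Ioo_subset_Icc_self
          exact continuousOn_const.mul (((Real.continuous_rpow_const hγ0).mul
            (by fun_prop)).continuousOn)
        · filter_upwards [ae_restrict_mem measurableSet_Ioo] with r hr
          have hr0 := hr.1
          rw [sum_truncated_eq]
          have hs : 0 ≤ σ * u r ^ 2 := by positivity
          refine (mul_le_mul_of_nonneg_left (truncated_exp_le hs hm)
            (Real.rpow_nonneg hr0.le _)).trans ?_
          have hexp : Real.exp (σ * u r ^ 2) ≤ Real.exp (9 * σ) * r ^ (-(9 * σ)) := by
            rw [Real.rpow_def_of_pos hr0, ← Real.exp_add, Real.exp_le_exp]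
            nlinarith [sq_le_one_sub_log hu hcont h1 hint hN hr]
          have habs : |u r| ≤ (1 - r) / r := by
            refine (abs_le_neg_log hu hcont h1 hint hN hr).trans ?_
            have := Real.log_le_sub_one_of_pos (inv_pos.mpr hr0)
            rw [Real.log_inv] at this
            refine this.trans_eq ?_
            field_simp
          have hu4 : (u r) ^ 4 ≤ ((1 - r) / r) ^ 4 := by
            rw [← (show Even 4 by decide).pow_abs]
            gcongr
          have e1 : r ^ γ = r ^ (α + 3) * r ^ (-(9 * σ)) / r ^ 4 := by
            rw [← Real.rpow_add hr0, ← Real.rpow_natCast, ← Real.rpow_sub hr0]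
            congr 1
            push_cast
            ring
          calc r ^ (α + 3) * ((σ * u r ^ 2) ^ 2 * Real.exp (σ * u r ^ 2))
              = r ^ (α + 3) * (σ ^ 2 * u r ^ 4 * Real.exp (σ * u r ^ 2)) := by ring
            _ ≤ r ^ (α + 3) * (σ ^ 2 * ((1 - r) / r) ^ 4 *
                (Real.exp (9 * σ) * r ^ (-(9 * σ)))) := by gcongr
            _ = _ := by
              rw [e1, hM]
              field_simp
    _ = M * (24 / ((γ + 1) * (γ + 2) * (γ + 3) * (γ + 4) * (γ + 5))) := by
        rw [integral_const_mul, ← integral_Ioc_eq_integral_Ioo,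
          ← intervalIntegral.integral_of_le zero_le_one, integral_rpow_mul_one_sub_pow_four hγ0]
    _ ≤ M * (24 / (α - 9 * σ) ^ 5) := by
        have e : α - 9 * σ = γ + 1 := by rw [hγ]; ring
        have e5 : (γ + 1) ^ 5 = (γ + 1) * (γ + 1) * (γ + 1) * (γ + 1) * (γ + 1) := by ring
        rw [e, e5]
        gcongr <;> norm_num

section Concentration

theorem lap4_eq_sum_fderiv (u : E4 → ℝ) (x : E4) :
    lap4 u x = ∑ i : Fin 4, fderiv ℝ (fderiv ℝ u) x (EuclideanSpace.single i 1)
      (EuclideanSpace.single i 1) := by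
  simp [lap4, iteratedFDeriv_two_apply]

theorem lap4_const_mul (c : ℝ) (u : E4 → ℝ) (x : E4) :
    lap4 (fun y => c * u y) x = c * lap4 u x := by
  have h : ∀ {G : Type} [NormedAddCommGroup G] [NormedSpace ℝ G] (w : E4 → G),
      fderiv ℝ (c • w) = c • fderiv ℝ w := fun w =>
    fderiv_const_smul_field (𝕜 := ℝ) (R := ℝ) (f := w) c
  rw [show (fun y => c * u y) = c • u from rfl]
  simp only [lap4_eq_sum_fderiv, h u, Finset.mul_sum]
  rw [h (fderiv ℝ u)]
  rfl

theorem lap4_comp_smul_sub (c : ℝ) (a : E4) (u : E4 → ℝ) (x : E4) :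
    lap4 (fun y => u (c • (y - a))) x = c ^ 2 * lap4 u (c • (x - a)) := by
  have h : ∀ {G : Type} [NormedAddCommGroup G] [NormedSpace ℝ G] (w : E4 → G),
      fderiv ℝ (fun y => w (c • (y - a))) = c • fun y => fderiv ℝ w (c • (y - a)) := by
    intro G _ _ w
    ext1 y
    rw [fderiv_comp_sub (f := fun z => w (c • z)) a, fderiv_comp_smul]
    rfl
  have h2 : fderiv ℝ (c • fun y => fderiv ℝ u (c • (y - a))) x =
      c • c • fderiv ℝ (fderiv ℝ u) (c • (x - a)) := by
    rw [fderiv_const_smul_field (𝕜 := ℝ) (R := ℝ) (f := fun y => fderiv ℝ u (c • (y - a))) c, h]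
    rfl
  simp only [lap4_eq_sum_fderiv, h u, h2, Finset.mul_sum]
  refine Finset.sum_congr rfl fun i _ => ?_
  simp only [smul_apply, smul_eq_mul]
  ring

theorem continuous_lap4 {u : E4 → ℝ} (hu : ContDiff ℝ (⊤ : ℕ∞) u) : Continuous (lap4 u) := by
  have h : Continuous (iteratedFDeriv ℝ 2 u) :=
    hu.continuous_iteratedFDeriv (WithTop.coe_le_coe.mpr le_top)
  unfold lap4
  fun_prop

theorem lap4_eq_zero_of_notMem_tsupport {u : E4 → ℝ} {x : E4} (hx : x ∉ tsupport u) :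
    lap4 u x = 0 := by
  have : iteratedFDeriv ℝ 2 u x = 0 := by
    by_contra h
    exact hx (support_iteratedFDeriv_subset 2 h)
  simp [lap4, this]

/-- A smooth function of small support with `‖Δφ‖₂ = 1`. -/
theorem exists_contDiff_integral_lap4_sq_eq_one : ∃ φ : E4 → ℝ, ContDiff ℝ (⊤ : ℕ∞) φ ∧
    tsupport φ ⊆ Metric.closedBall 0 (1 / 4) ∧ ∫ x, (lap4 φ x) ^ 2 = 1 := by
  let b : ContDiffBump (0 : E4) := ⟨1 / 8, 1 / 4, by norm_num, by norm_num⟩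
  let L : E4 →L[ℝ] ℝ := EuclideanSpace.proj 0
  let f : E4 → ℝ := fun x => b x * (L x) ^ 2
  have hf : ContDiff ℝ (⊤ : ℕ∞) f := b.contDiff.mul (L.contDiff.pow 2)
  have hsupp : tsupport f ⊆ Metric.closedBall 0 (1 / 4) := by
    refine (tsupport_mul_subset_left (f := fun x => b x)).trans ?_
    rw [b.tsupport_eq]
  have hL : fderiv ℝ (fun x => L x ^ 2) = fun x => (2 • L).smulRight L x := by
    ext x v
    simp [((L.hasFDerivAt (x := x)).pow 2).fderiv]
  have hf0 : lap4 f 0 = 2 := by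
    have he : f =ᶠ[nhds 0] fun x => L x ^ 2 := by
      filter_upwards [Metric.closedBall_mem_nhds (0 : E4) (by norm_num : (0:ℝ) < 1 / 8)] with x hx
      simp [f, b.one_of_mem_closedBall hx]
    have h0 : lap4 f 0 = lap4 (fun x => L x ^ 2) 0 := by
      unfold lap4
      rw [(he.iteratedFDeriv ℝ 2).eq_of_nhds]
    rw [h0, lap4_eq_sum_fderiv, hL, ContinuousLinearMap.fderiv]
    simp [L, Fin.sum_univ_four]
  have hcs : HasCompactSupport f :=
    (isCompact_closedBall (0 : E4) (1 / 4)).of_isClosed_subset (isClosed_tsupport f) hsupp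
  have hI : 0 < ∫ x, (lap4 f x) ^ 2 := by
    refine Continuous.integral_pos_of_hasCompactSupport_nonneg_nonzero (x := 0)
      ((continuous_lap4 hf).pow 2) ?_ (fun x => sq_nonneg _) (by rw [hf0]; norm_num)
    refine HasCompactSupport.intro hcs fun x hx => ?_
    rw [lap4_eq_zero_of_notMem_tsupport hx]
    norm_num
  set I := ∫ x, (lap4 f x) ^ 2
  refine ⟨fun x => (Real.sqrt I)⁻¹ * f x, contDiff_const.mul hf,
    (tsupport_mul_subset_right (f := fun _ => (Real.sqrt I)⁻¹)).trans hsupp, ?_⟩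
  simp only [lap4_const_mul, mul_pow, integral_const_mul, inv_pow, Real.sq_sqrt hI.le]
  exact inv_mul_cancel₀ hI.ne'

theorem integral_comp_smul_sub (g : E4 → ℝ) {c : ℝ} (hc : 0 < c) (a : E4) :
    ∫ x, g (c • (x - a)) = (c ^ 4)⁻¹ * ∫ x, g x := by
  rw [integral_sub_right_eq_self (fun x => g (c • x)) a, Measure.integral_comp_smul,
    finrank_euclideanSpace_fin, abs_of_pos (by positivity), smul_eq_mul]

theorem truncated_exp_pos {s : ℝ} (hs : 0 < s) (m : ℕ) :
    0 < Real.exp s - ∑ k ∈ Finset.range (m + 1), s ^ k / (Nat.factorial k) := by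
  have h := Real.sum_le_exp_of_nonneg hs.le (m + 2)
  rw [Finset.sum_range_succ] at h
  have : 0 < s ^ (m + 1) / (Nat.factorial (m + 1)) := by positivity
  linarith

theorem exists_concentrated_lower_bound {σ : ℝ} (hσ : 0 < σ) (m : ℕ) :
    ∃ c > (0:ℝ), ∀ α : ℝ, 1 ≤ α → ∃ v : E4 → ℝ, ContDiff ℝ (⊤ : ℕ∞) v ∧
      tsupport v ⊆ Metric.ball (0:E4) 1 ∧
      (∫ x in Metric.ball (0:E4) 1, (lap4 v x) ^ 2) = 1 ∧ c / α ^ 4 ≤ Fm α σ m v := by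
  obtain ⟨φ, hφ, hsupp, hI⟩ := exists_contDiff_integral_lap4_sq_eq_one
  obtain ⟨Ψ, hΨ⟩ : ∃ Ψ : ℝ → ℝ, Ψ = fun y => Real.exp (σ * y ^ 2) -
    ∑ k ∈ Finset.range (m + 1), σ ^ k * y ^ (2 * k) / (Nat.factorial k) := ⟨_, rfl⟩
  have hΨc : Continuous Ψ := by rw [hΨ]; fun_prop
  have hΨ0 : Ψ 0 = 0 := by
    simp only [hΨ, sum_truncated_eq]
    simp [Finset.sum_range_succ']
  have hΨnn : ∀ y, 0 ≤ Ψ y := fun y => by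
    simp only [hΨ, sum_truncated_eq]
    exact truncated_exp_nonneg (by positivity) m
  have hΨpos : ∀ y, y ≠ 0 → 0 < Ψ y := fun y hy => by
    simp only [hΨ, sum_truncated_eq]
    exact truncated_exp_pos (by positivity) m
  have hcs : HasCompactSupport φ :=
    (isCompact_closedBall (0 : E4) (1 / 4)).of_isClosed_subset (isClosed_tsupport φ) hsupp
  obtain ⟨x₀, hx₀⟩ : ∃ x, φ x ≠ 0 := by
    by_contra! h
    have : φ = fun y => 0 * φ y := by ext y; simp [h y]
    have h0 : ∀ x, lap4 φ x = 0 := fun x => by rw [this, lap4_const_mul, zero_mul]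
    simp [h0] at hI
  have hJ : 0 < ∫ x, Ψ (φ x) :=
    Continuous.integral_pos_of_hasCompactSupport_nonneg_nonzero (x := x₀)
      (hΨc.comp hφ.continuous) (hcs.comp_left hΨ0) (fun x => hΨnn _) (hΨpos _ hx₀).ne'
  refine ⟨1 / 4 * ∫ x, Ψ (φ x), by positivity, fun α hα => ?_⟩
  have hα0 : 0 < α := by linarith
  set a : E4 := EuclideanSpace.single 0 (1 - 1 / (2 * α)) with ha
  have h2α : 1 / (2 * α) ≤ 1 / 2 := by
    rw [div_le_div_iff₀ (by positivity) (by norm_num)]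
    linarith
  have hna : ‖a‖ = 1 - 1 / (2 * α) := by
    rw [ha, PiLp.norm_single, Real.norm_of_nonneg (by linarith)]
  have hloc : ∀ x : E4, α • (x - a) ∈ Metric.closedBall (0 : E4) (1 / 4) →
      1 - 3 / (4 * α) ≤ ‖x‖ ∧ ‖x‖ < 1 := by
    intro x hx
    rw [mem_closedBall_zero_iff, norm_smul, Real.norm_of_nonneg hα0.le] at hx
    have hx' : ‖x - a‖ ≤ 1 / (4 * α) := by
      rw [le_div_iff₀ (by positivity)]
      linarith
    have h1 := norm_sub_norm_le x a
    have h2 := norm_sub_norm_le a x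
    rw [norm_sub_rev] at h2
    have e1 : 1 / (2 * α) = 2 * (1 / (4 * α)) := by field_simp; norm_num
    have e2 : 3 / (4 * α) = 3 * (1 / (4 * α)) := by ring
    have e3 : 0 < 1 / (4 * α) := by positivity
    constructor <;> linarith
  set v : E4 → ℝ := fun x => φ (α • (x - a)) with hv
  have hvc : ContDiff ℝ (⊤ : ℕ∞) v :=
    hφ.comp ((contDiff_id.sub contDiff_const).const_smul α)
  have hvz : ∀ x, α • (x - a) ∉ Metric.closedBall (0 : E4) (1 / 4) → v x = 0 := fun x hx =>
    image_eq_zero_of_notMem_tsupport (f := φ) fun h => hx (hsupp h)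
  have hvsupp : tsupport v ⊆ Metric.ball (0:E4) 1 := by
    have hcl : IsClosed ((fun x : E4 => α • (x - a)) ⁻¹' Metric.closedBall (0 : E4) (1 / 4)) :=
      Metric.isClosed_closedBall.preimage (by fun_prop)
    refine (closure_minimal (fun x hx => ?_) hcl).trans fun x hx => ?_
    · by_contra h
      exact hx (hvz x h)
    · exact mem_ball_zero_iff.mpr (hloc x hx).2
  have hvcs : HasCompactSupport v :=
    (isCompact_closedBall (0 : E4) 1).of_isClosed_subset (isClosed_tsupport v)
      (hvsupp.trans Metric.ball_subset_closedBall)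
  have hvout : ∀ x ∉ Metric.ball (0:E4) 1, v x = 0 := fun x hx =>
    image_eq_zero_of_notMem_tsupport fun h => hx (hvsupp h)
  refine ⟨v, hvc, hvsupp, ?_, ?_⟩
  · rw [setIntegral_eq_integral_of_forall_compl_eq_zero fun x hx => by
      rw [lap4_eq_zero_of_notMem_tsupport fun h => hx (hvsupp h)]; norm_num]
    simp only [hv, lap4_comp_smul_sub, mul_pow]
    rw [integral_const_mul, integral_comp_smul_sub (fun x => lap4 φ x ^ 2) hα0, hI]
    field_simp
  · have hFm : Fm α σ m v = ∫ x, ‖x‖ ^ α * Ψ (v x) := by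
      rw [← setIntegral_eq_integral_of_forall_compl_eq_zero (s := Metric.ball 0 1), hΨ]
      · rfl
      intro x hx
      rw [hvout x hx, hΨ0, mul_zero]
    have hcomp : HasCompactSupport fun x => Ψ (v x) := hvcs.comp_left (g := Ψ) hΨ0
    have hcont : Continuous fun x => Ψ (v x) := hΨc.comp hvc.continuous
    calc (1 / 4 * ∫ x, Ψ (φ x)) / α ^ 4 = ∫ x, 1 / 4 * Ψ (v x) := by
          rw [integral_const_mul]
          simp only [hv]
          rw [integral_comp_smul_sub (fun x => Ψ (φ x)) hα0]
          ring
      _ ≤ ∫ x, ‖x‖ ^ α * Ψ (v x) := by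
          refine integral_mono ((hcont.integrable_of_hasCompactSupport hcomp).const_mul _)
            (Continuous.integrable_of_hasCompactSupport
              ((continuous_norm.rpow_const fun _ => Or.inr hα0.le).mul hcont) hcomp.mul_left) ?_
          intro x
          by_cases hx : α • (x - a) ∈ Metric.closedBall (0 : E4) (1 / 4)
          · have h34 : 3 / (4 * α) ≤ 3 / 4 := by
              rw [div_le_div_iff₀ (by positivity) (by norm_num)]
              linarith
            have hb := one_add_mul_self_le_rpow_one_add (s := -(3 / (4 * α))) (by linarith) hα
            have e : 1 + α * -(3 / (4 * α)) = 1 / 4 := by field_simp; norm_num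
            rw [e] at hb
            refine mul_le_mul_of_nonneg_right (hb.trans ?_) (hΨnn _)
            exact Real.rpow_le_rpow (by linarith) (by linarith [(hloc x hx).1]) hα0.le
          · simp [hvz x hx, hΨ0]
      _ = Fm α σ m v := hFm.symm

end Concentration

theorem pow_four_mul_sqrt_eq_rpow {α : ℝ} (hα : 0 < α) :
    α ^ ((9:ℝ) / 2) = α ^ 4 * Real.sqrt α := by
  rw [Real.sqrt_eq_rpow, ← Real.rpow_natCast, ← Real.rpow_add hα]
  norm_num

/-- Symmetry breaking: for `σ ≤ 32π²` and `m ≥ 1`, there is `C > 0` (independent of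
`α`) such that for all sufficiently large `α`, every radial `u ∈ H²_{N,rad}(B)` with
`‖Δu‖₂ = 1` satisfies `F_m(u) ≤ C/α^{9/2}`, i.e. `T^{rad}_{α,m} ≤ C/α^{9/2}`, and
moreover there exists a (necessarily nonradial) `v ∈ H²_N(B)` with `‖Δv‖₂ = 1` and
`F_m(v) > C/α^{9/2}`, so that `T^{rad}_{α,m} < T_{α,m}`. -/
theorem radial_upper_bound_and_symmetry_breaking (σ : ℝ)
    (hσ0 : 0 < σ) (hσ : σ ≤ 32 * Real.pi ^ 2) (m : ℕ) (hm : 1 ≤ m) :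
    ∃ C > (0:ℝ), ∃ A : ℝ, ∀ α ≥ A,
      ((∀ u : ℝ → ℝ,
          ContDiffOn ℝ 2 u (Set.Ioo 0 1) → ContinuousOn u (Set.Icc 0 1) → u 1 = 0 →
          IntegrableOn (fun r => (radLap u r) ^ 2 * r ^ 3) (Set.Ioo 0 1) →
          (ω₃ * ∫ r in Set.Ioo (0:ℝ) 1, (radLap u r) ^ 2 * r ^ 3) = 1 →
          FmRad α σ m u ≤ C / α ^ ((9:ℝ)/2)) ∧
        ∃ v : E4 → ℝ, ContDiff ℝ (⊤ : ℕ∞) v ∧ tsupport v ⊆ Metric.ball (0:E4) 1 ∧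
          (∫ x in Metric.ball (0:E4) 1, (lap4 v x) ^ 2) = 1 ∧
          C / α ^ ((9:ℝ)/2) < Fm α σ m v) := by

  obtain ⟨c, hc, hlow⟩ := exists_concentrated_lower_bound hσ0 m
  have hω : 0 < ω₃ := by unfold ω₃; positivity
  have hω1 : 1 ≤ ω₃ := by
    unfold ω₃
    nlinarith [Real.pi_gt_three]
  set D := ω₃ * (σ ^ 2 * Real.exp (9 * σ) * 768) with hD
  have hD0 : 0 < D := by positivity
  refine ⟨1, one_pos, 18 * σ + 2 + D ^ 2 + (2 / c) ^ 2, fun α hα => ?_⟩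
  have hD2 : 0 < D ^ 2 := by positivity
  have hc2 : 0 < (2 / c) ^ 2 := by positivity
  have hα0 : 0 < α := by linarith
  have hsq : Real.sqrt α * Real.sqrt α = α := Real.mul_self_sqrt hα0.le
  have hsq0 : 0 < Real.sqrt α := Real.sqrt_pos.mpr hα0
  constructor
  · intro u hu hcont h1 hint hN
    have hN' : ∫ r in Set.Ioo (0:ℝ) 1, (radLap u r) ^ 2 * r ^ 3 ≤ 1 := by
      refine hN.le.trans' (le_mul_of_one_le_left
        (setIntegral_nonneg measurableSet_Ioo fun r hr => ?_) hω1)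
      have := hr.1
      positivity
    refine (FmRad_le hσ0 hm (by linarith) hu hcont h1 hint hN').trans ?_
    have hDs : D ≤ Real.sqrt α := Real.le_sqrt_of_sq_le (by linarith)
    calc ω₃ * (σ ^ 2 * Real.exp (9 * σ) * (24 / (α - 9 * σ) ^ 5))
        ≤ ω₃ * (σ ^ 2 * Real.exp (9 * σ) * (24 / (α / 2) ^ 5)) := by
          gcongr
          linarith
      _ = D / α ^ 5 := by rw [hD]; field_simp; norm_num
      _ ≤ Real.sqrt α / α ^ 5 := by gcongr
      _ = 1 / α ^ ((9:ℝ) / 2) := by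
          rw [pow_four_mul_sqrt_eq_rpow hα0, div_eq_div_iff (by positivity) (by positivity)]
          linear_combination α ^ 4 * hsq
  · obtain ⟨v, hv1, hv2, hv3, hv4⟩ := hlow α (by linarith)
    refine ⟨v, hv1, hv2, hv3, lt_of_lt_of_le ?_ hv4⟩
    have hcs : 2 / c ≤ Real.sqrt α := Real.le_sqrt_of_sq_le (by linarith)
    rw [div_le_iff₀ hc] at hcs
    rw [pow_four_mul_sqrt_eq_rpow hα0, div_lt_div_iff₀ (by positivity) (by positivity)]
    have : 0 < α ^ 4 := by positivity
    nlinarith
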